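/- Let {Y_k : k ≤ n}, with n ∈ ℕ^d, be a negatively associated field of random variables with E[Y_k] = 0 and |Y_k| ≤ b almost surely for some 0 < b < ∞. Set T_k = Σ_{i ≤ k} Y_i, M_n = max_{k ≤ n} |T_k| and B_n² = Σ_{k ≤ n} E[Y_k²]. Then for all x > 0, P( M_n − 2 E[M_n] ≥ 20x ) ≤ 2^{d+1} exp( − x² / (2(bx + B_n²)) ). -/

import Mathlib

/-!
The proof compares `M_n` with the maximum of the randomly signed partial sums. Write `I = [1, n]`,
let `G` be a uniformly random subset of `I`, and split `T_k = T_k(G) + T_k(I \ G)`; the signed sum is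
`R_k = T_k(G) - T_k(I \ G)`.

*Tail of the signed sums.* For a fixed outcome the `R_k` are sums of independent symmetric terms,
so reflection in one coordinate at a time gives Lévy's inequality
`P(max |R_k| ≥ s) ≤ 2 ^ d P(|R_n| ≥ s)` (`levy`). Now `|R_n| ≥ s` forces one of `|T_n(G)|`,
`|T_n(I \ G)|` to be at least `s / 2`. Negative association makes moment generating functions
submultiplicative, so Bernstein's inequality holds for these sums, with half of the variance because
`G` is random (`avg_tail`). With `z = exp(-x² / (2(bx + B_n²)))` and `s = 14x/3` this gives
`p := P(max |R_k| ≥ s) ≤ 4 · 2 ^ d · z ^ 7` (`sym_tail`).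

*Desymmetrization* (`one_sided`). Discard the outcomes for which at least a quarter of the `G` have
`max |R_k| ≥ s`; they have probability at most `4p`. On the remaining ones, `T_k ≥ 2 E M_n + 20x`
implies `T_k(G) = (T_k + R_k) / 2 ≥ E M_n + 10x - s/2` for three quarters of the `G`. By Markov's
inequality `M_n ≥ 2 E M_n + x` has probability at most `1/2`, so
`max T_k(I \ G) < E M_n + (s + x)/2` has probability at least `1/2 - p` on average over `G`. The first
event is increasing in the variables of `G`, the second decreasing in those of `I \ G`, so for each
`G` negative association bounds the probability of both from below by the product; and both
together force `R_k ≥ s`. Hence `(1/4 - p) P(max T_k ≥ 2 E M_n + 20x, not discarded) ≤ p`, and the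
same holds for `-Y`.

The claimed bound is trivial unless `2 ^ (d + 1) z < 1`. In that case `p ≤ 1/32`, and the total
`4p + 5p + 5p` is at most `2 ^ (d + 1) z`.
-/

open MeasureTheory Filter Finset

noncomputable section

/-- `plog x = ln (max x e)`, the truncated logarithm used in the paper. -/
def plog (x : ℝ) : ℝ := Real.log (max x (Real.exp 1))

/-- A family of real random variables `X i`, `i ∈ S`, is *negatively associated* if for every
pair of disjoint finite subsets `A`, `B` of `S` and all coordinatewise non-decreasing functions
`f`, `g`, one has `Cov (f (X_i, i ∈ A), g (X_j, j ∈ B)) ≤ 0`, whenever the covariance exists. -/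
def NegAssocOn {Ω : Type} [MeasurableSpace Ω] (μ : Measure Ω) {ι : Type}
    (X : ι → Ω → ℝ) (S : Set ι) : Prop :=
  ∀ A B : Finset ι, ↑A ⊆ S → ↑B ⊆ S → Disjoint A B →
    ∀ (f : (↥A → ℝ) → ℝ) (g : (↥B → ℝ) → ℝ), Monotone f → Monotone g →
      Integrable (fun ω => f (fun i => X i ω)) μ →
      Integrable (fun ω => g (fun j => X j ω)) μ →
      Integrable (fun ω => f (fun i => X i ω) * g (fun j => X j ω)) μ →
      ∫ ω, f (fun i => X i ω) * g (fun j => X j ω) ∂μ ≤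
        (∫ ω, f (fun i => X i ω) ∂μ) * ∫ ω, g (fun j => X j ω) ∂μ

section Helpers

open scoped Classical

/-! ### Partial sums and signed partial sums -/

/-- The sum of `y i` over the indices `i ∈ G` lying below `k`. -/
def psum {d : ℕ} (G : Finset (Fin d → ℕ)) (k : Fin d → ℕ) (y : (Fin d → ℕ) → ℝ) : ℝ :=
  ∑ i ∈ G, if i ≤ k then y i else 0

/-- The signed sum of `y i` over the indices `i ∈ I` lying below `k`, the sign being `+` on `G`
and `-` off `G`. A uniformly random `G ⊆ I` makes this a Rademacher sum. -/
def rsum {d : ℕ} (I G : Finset (Fin d → ℕ)) (k : Fin d → ℕ) (y : (Fin d → ℕ) → ℝ) : ℝ :=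
  ∑ i ∈ I, if i ≤ k then (if i ∈ G then y i else -y i) else 0

lemma rsum_eq {d : ℕ} {I G : Finset (Fin d → ℕ)} (hG : G ⊆ I) (k : Fin d → ℕ)
    (y : (Fin d → ℕ) → ℝ) : rsum I G k y = psum G k y - psum (I \ G) k y := by
  unfold rsum psum
  rw [← Finset.sum_sdiff hG, add_comm, sub_eq_add_neg, ← Finset.sum_neg_distrib]
  congr 1
  · refine Finset.sum_congr rfl fun i hi => ?_
    simp [hi]
  · refine Finset.sum_congr rfl fun i hi => ?_
    simp only [Finset.mem_sdiff] at hi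
    by_cases h : i ≤ k <;> simp [h, hi.2]

lemma psum_add_sdiff {d : ℕ} {I G : Finset (Fin d → ℕ)} (hG : G ⊆ I) (k : Fin d → ℕ)
    (y : (Fin d → ℕ) → ℝ) : psum G k y + psum (I \ G) k y = psum I k y := by
  unfold psum
  rw [← Finset.sum_sdiff hG, add_comm]

lemma psum_neg {d : ℕ} (G : Finset (Fin d → ℕ)) (k : Fin d → ℕ) (y : (Fin d → ℕ) → ℝ) :
    psum G k (fun i => -y i) = -psum G k y := by
  unfold psum
  rw [← Finset.sum_neg_distrib]
  refine Finset.sum_congr rfl fun i _ => ?_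
  split_ifs <;> simp

lemma rsum_neg {d : ℕ} (I G : Finset (Fin d → ℕ)) (k : Fin d → ℕ) (y : (Fin d → ℕ) → ℝ) :
    rsum I G k (fun i => -y i) = -rsum I G k y := by
  unfold rsum
  rw [← Finset.sum_neg_distrib]
  refine Finset.sum_congr rfl fun i _ => ?_
  split_ifs <;> simp

lemma sum_Icc_eq_psum {d : ℕ} {n k : Fin d → ℕ} (hk : k ≤ n) (y : (Fin d → ℕ) → ℝ) :
    ∑ i ∈ Finset.Icc 1 k, y i = psum (Finset.Icc 1 n) k y := by
  unfold psum
  rw [← Finset.sum_filter]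
  refine Finset.sum_congr ?_ fun _ _ => rfl
  ext i
  simp only [Finset.mem_Icc, Finset.mem_filter]
  exact ⟨fun h => ⟨⟨h.1, h.2.trans hk⟩, h.2⟩, fun h => ⟨h.1.1, h.2⟩⟩

lemma psum_top {d : ℕ} {n : Fin d → ℕ} {G : Finset (Fin d → ℕ)} (hG : G ⊆ Finset.Icc 1 n)
    (y : (Fin d → ℕ) → ℝ) : psum G n y = ∑ i ∈ G, y i := by
  unfold psum
  refine Finset.sum_congr rfl fun i hi => ?_
  rw [if_pos (Finset.mem_Icc.mp (hG hi)).2]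

/-! ### Lévy's inequality in several parameters -/

/-- Flipping the signs of all indices whose `j`-th coordinate exceeds `t`. -/
def flipAbove {d : ℕ} (I : Finset (Fin d → ℕ)) (j : Fin d) (t : ℕ) (G : Finset (Fin d → ℕ)) :
    Finset (Fin d → ℕ) :=
  symmDiff G {i ∈ I | t < i j}

lemma flipAbove_flipAbove {d : ℕ} (I : Finset (Fin d → ℕ)) (j : Fin d) (t : ℕ)
    (G : Finset (Fin d → ℕ)) : flipAbove I j t (flipAbove I j t G) = G := by
  unfold flipAbove
  rw [symmDiff_assoc, symmDiff_self, symmDiff_bot]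

lemma flipAbove_subset {d : ℕ} {I G : Finset (Fin d → ℕ)} (j : Fin d) (t : ℕ) (hG : G ⊆ I) :
    flipAbove I j t G ⊆ I := by
  intro i hi
  simp only [flipAbove, Finset.mem_symmDiff, Finset.mem_filter] at hi
  rcases hi with h | h
  · exact hG h.1
  · exact h.1.1

lemma rsum_flipAbove_of_le {d : ℕ} (I G : Finset (Fin d → ℕ)) (j : Fin d) {t : ℕ}
    {k : Fin d → ℕ} (hk : k j ≤ t) (y : (Fin d → ℕ) → ℝ) :
    rsum I (flipAbove I j t G) k y = rsum I G k y := by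
  unfold rsum
  refine Finset.sum_congr rfl fun i hi => ?_
  by_cases h : i ≤ k
  · have : ¬ t < i j := not_lt.mpr ((h j).trans hk)
    simp [h, flipAbove, Finset.mem_symmDiff, this]
  · simp [h]

/-- The reflection identity behind Lévy's inequality. -/
lemma rsum_add_rsum_flipAbove {d : ℕ} (n : Fin d → ℕ) (G : Finset (Fin d → ℕ)) (j : Fin d)
    (k : Fin d → ℕ) (y : (Fin d → ℕ) → ℝ) :
    rsum (Finset.Icc 1 n) G (Function.update k j (n j)) y
      + rsum (Finset.Icc 1 n) (flipAbove (Finset.Icc 1 n) j (k j) G)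
          (Function.update k j (n j)) y
      = 2 * rsum (Finset.Icc 1 n) G k y := by
  unfold rsum
  rw [← Finset.sum_add_distrib, Finset.mul_sum]
  refine Finset.sum_congr rfl fun i hi => ?_
  have hin := (Finset.mem_Icc.mp hi).2
  by_cases hij : k j < i j
  · have h1 : ¬ i ≤ k := fun h => absurd (h j) (not_le.mpr hij)
    by_cases h2 : i ≤ Function.update k j (n j) <;> by_cases h3 : i ∈ G <;>
      simp only [h1, h2, h3, hi, hij, flipAbove, Finset.mem_symmDiff, Finset.mem_filter] <;> simp
  · have h2 : i ≤ Function.update k j (n j) ↔ i ≤ k := by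
      rw [le_update_iff]
      constructor
      · rintro ⟨_, h⟩ l
        by_cases hl : l = j
        · subst hl; exact not_lt.mp hij
        · exact h l hl
      · exact fun h => ⟨hin j, fun l _ => h l⟩
    by_cases h1 : i ≤ k <;> by_cases h3 : i ∈ G <;>
      simp only [h1, h2, h3, hi, hij, flipAbove, Finset.mem_symmDiff, Finset.mem_filter] <;> simp <;> ring

/-- The sign patterns `G ⊆ [1, n]` for which some signed sum over a box `[1, k]` is at least `s` in
absolute value, where only the first `m` coordinates of `k ∈ [1, n]` may differ from those
of `n`. -/
def levyFam {d : ℕ} (n : Fin d → ℕ) (y : (Fin d → ℕ) → ℝ) (s : ℝ) (m : ℕ) :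
    Finset (Finset (Fin d → ℕ)) :=
  {G ∈ (Finset.Icc 1 n).powerset | ∃ k ∈ Finset.Icc 1 n,
    (∀ i : Fin d, m ≤ i → k i = n i) ∧ s ≤ |rsum (Finset.Icc 1 n) G k y|}

lemma mem_levyFam {d : ℕ} {n : Fin d → ℕ} {y : (Fin d → ℕ) → ℝ} {s : ℝ} {m : ℕ}
    {G : Finset (Fin d → ℕ)} : G ∈ levyFam n y s m ↔ G ⊆ Finset.Icc 1 n ∧
      ∃ k ∈ Finset.Icc 1 n,
        (∀ i : Fin d, m ≤ i → k i = n i) ∧ s ≤ |rsum (Finset.Icc 1 n) G k y| := by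
  unfold levyFam
  simp only [Finset.mem_filter, Finset.mem_powerset]

/-- One coordinate of the multiparameter Lévy inequality: allowing the `j`-th coordinate of the
upper corner to vary as well at most doubles the number of sign patterns with a large signed sum.
The pattern is reflected after the first level `t` of the `j`-th coordinate at which a sum is
large. -/
lemma levy_step {d : ℕ} (n : Fin d → ℕ) (y : (Fin d → ℕ) → ℝ) (s : ℝ) (j : Fin d) :
    #(levyFam n y s (j + 1)) ≤ 2 * #(levyFam n y s j) := by
  set P := levyFam n y s (j + 1) with hP
  set Q := levyFam n y s j with hQ
  set I := Finset.Icc 1 n with hI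
  let D : Finset (Fin d → ℕ) → ℕ → Prop := fun G t => ∃ k ∈ I,
    (∀ i : Fin d, (j : ℕ) + 1 ≤ i → k i = n i) ∧ k j = t ∧ s ≤ |rsum I G k y|
  let τ : Finset (Fin d → ℕ) → ℕ := fun G => sInf {t | D G t}
  have hDτ : ∀ G ∈ P, D G (τ G) := by
    intro G hG
    obtain ⟨-, k, hk, h1, h2⟩ := mem_levyFam.mp hG
    exact Nat.sInf_mem (s := {t | D G t}) ⟨k j, k, hk, h1, rfl, h2⟩
  have hDflip : ∀ G t u, u ≤ t → (D (flipAbove I j t G) u ↔ D G u) := by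
    intro G t u hut
    constructor
    · rintro ⟨k, hk, h1, h2, h3⟩
      exact ⟨k, hk, h1, h2, by rwa [rsum_flipAbove_of_le I G j (h2.le.trans hut)] at h3⟩
    · rintro ⟨k, hk, h1, h2, h3⟩
      exact ⟨k, hk, h1, h2, by rwa [rsum_flipAbove_of_le I G j (h2.le.trans hut)]⟩
  have hτ : ∀ G ∈ P, τ (flipAbove I j (τ G) G) = τ G := by
    intro G hG
    have h1 : D (flipAbove I j (τ G) G) (τ G) := (hDflip G _ _ le_rfl).mpr (hDτ G hG)
    have h2 : τ (flipAbove I j (τ G) G) ≤ τ G := Nat.sInf_le h1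
    have h3 : D (flipAbove I j (τ G) G) (τ (flipAbove I j (τ G) G)) :=
      Nat.sInf_mem (s := {t | D (flipAbove I j (τ G) G) t}) ⟨_, h1⟩
    exact le_antisymm h2 (Nat.sInf_le ((hDflip G _ _ h2).mp h3))
  have hkey : ∀ G ∈ P, G ∈ Q ∨ flipAbove I j (τ G) G ∈ Q := by
    intro G hG
    have hGI := (mem_levyFam.mp hG).1
    obtain ⟨k, hk, h1, h2, h3⟩ := hDτ G hG
    have hkn := Finset.mem_Icc.mp hk
    have hk' : Function.update k j (n j) ∈ I := by
      refine Finset.mem_Icc.mpr ⟨?_, ?_⟩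
      · rw [le_update_iff]
        exact ⟨(hkn.1 j).trans (hkn.2 j), fun i _ => hkn.1 i⟩
      · rw [update_le_iff]
        exact ⟨le_rfl, fun i _ => hkn.2 i⟩
    have hk'' : ∀ i : Fin d, (j : ℕ) ≤ i → Function.update k j (n j) i = n i := by
      intro i hi
      by_cases hij : i = j
      · subst hij; simp
      · rw [Function.update_of_ne hij]
        exact h1 i (by have := Fin.val_ne_of_ne hij; omega)
    have hsum := rsum_add_rsum_flipAbove n G j k y
    rw [← hI, h2] at hsum
    by_contra! hcon
    obtain ⟨hc1, hc2⟩ := hcon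
    have e1 : |rsum I G (Function.update k j (n j)) y| < s := by
      by_contra! h
      exact hc1 (mem_levyFam.mpr ⟨hGI, _, hk', hk'', h⟩)
    have e2 : |rsum I (flipAbove I j (τ G) G) (Function.update k j (n j)) y| < s := by
      by_contra! h
      exact hc2 (mem_levyFam.mpr ⟨flipAbove_subset j _ hGI, _, hk', hk'', h⟩)
    rw [abs_lt] at e1 e2
    have : |rsum I G k y| < s := by
      rw [abs_lt]; constructor <;> linarith
    linarith
  have hcard : #(P \ Q) ≤ #Q := by
    refine Finset.card_le_card_of_injOn (fun G => flipAbove I j (τ G) G) ?_ ?_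
    · intro G hG
      have hG' := Finset.mem_sdiff.mp hG
      exact (hkey G hG'.1).resolve_left hG'.2
    · intro G hG H hH hGH
      have hG' := (Finset.mem_sdiff.mp hG).1
      have hH' := (Finset.mem_sdiff.mp hH).1
      have hGH : flipAbove I j (τ G) G = flipAbove I j (τ H) H := hGH
      have e : τ G = τ H := by rw [← hτ G hG', hGH, hτ H hH']
      rw [← flipAbove_flipAbove I j (τ G) G, hGH, e, flipAbove_flipAbove]
  have h1 : #P ≤ #(P \ Q) + #Q := by
    have := Finset.card_sdiff_add_card P Q
    have h2 := Finset.card_le_card (Finset.subset_union_left (s₁ := P) (s₂ := Q))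
    omega
  omega

/-- **Multiparameter Lévy inequality** for Rademacher sums, in counting form. -/
lemma levy {d : ℕ} (n : Fin d → ℕ) (y : (Fin d → ℕ) → ℝ) (s : ℝ) :
    #(levyFam n y s d) ≤ 2 ^ d * #(levyFam n y s 0) := by
  have key : ∀ m : ℕ, m ≤ d → #(levyFam n y s m) ≤ 2 ^ m * #(levyFam n y s 0) := by
    intro m
    induction m with
    | zero => simp
    | succ m ih =>
      intro hm
      have h1 : #(levyFam n y s (m + 1)) ≤ 2 * #(levyFam n y s m) := levy_step n y s ⟨m, hm⟩
      have h2 := ih (by omega)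
      rw [pow_succ]
      linarith
  exact key d le_rfl

/-! ### Bernstein's inequality over random subsets -/

/-- A rational (Padé) bound of the exponential, valid on the whole line. -/
lemma exp_mul_le (t : ℝ) : Real.exp t * (1 - t / 3) ≤ 1 + 2 * t / 3 + t ^ 2 / 6 := by
  -- `h ≥ 0` is the claim divided by `exp t`; it is convex with `h 0 = h' 0 = 0`, and `g = h'`.
  let g : ℝ → ℝ := fun t => 1 / 3 - Real.exp (-t) * (1 / 3 + t / 3 + t ^ 2 / 6)
  let h : ℝ → ℝ := fun t => Real.exp (-t) * (1 + 2 * t / 3 + t ^ 2 / 6) - (1 - t / 3)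
  have hexp : ∀ t : ℝ, HasDerivAt (fun t : ℝ => Real.exp (-t)) (-Real.exp (-t)) t := fun t => by
    simpa using (hasDerivAt_neg t).exp
  have hpow : ∀ t : ℝ, HasDerivAt (fun t : ℝ => t ^ 2) (2 * t) t := fun t => by
    simpa using hasDerivAt_pow 2 t
  have hg : ∀ t, HasDerivAt g (Real.exp (-t) * (t ^ 2 / 6)) t := fun t => by
    have h1 : HasDerivAt (fun t : ℝ => 1 / 3 + t / 3 + t ^ 2 / 6) (1 / 3 + 2 * t / 6) t :=
      (((hasDerivAt_id' t).div_const 3).const_add (1 / 3)).add ((hpow t).div_const 6)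
    exact (((hexp t).mul h1).const_sub (1 / 3)).congr_deriv (by ring)
  have hh : ∀ t, HasDerivAt h (g t) t := fun t => by
    have h1 : HasDerivAt (fun t : ℝ => 1 + 2 * t / 3 + t ^ 2 / 6) (2 * 1 / 3 + 2 * t / 6) t :=
      ((((hasDerivAt_id' t).const_mul 2).div_const 3).const_add 1).add ((hpow t).div_const 6)
    have h2 : HasDerivAt (fun t : ℝ => 1 - t / 3) (-(1 / 3)) t :=
      ((hasDerivAt_id' t).div_const 3).const_sub 1
    exact (((hexp t).mul h1).sub h2).congr_deriv (by simp only [g]; ring)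
  have hgm : Monotone g := monotone_of_deriv_nonneg (fun t => (hg t).differentiableAt)
    fun t => by rw [(hg t).deriv]; positivity
  have hconv : ConvexOn ℝ Set.univ h := by
    refine MonotoneOn.convexOn_of_deriv convex_univ
      (fun t _ => (hh t).continuousAt.continuousWithinAt)
      (fun t _ => (hh t).differentiableAt.differentiableWithinAt) ?_
    have : deriv h = g := funext fun t => (hh t).deriv
    rw [this]
    exact hgm.monotoneOn _
  have hmin : IsMinOn h Set.univ 0 := by
    refine hconv.isMinOn_of_rightDeriv_eq_zero (by simp) ?_
    rw [(hh 0).hasDerivWithinAt.derivWithin (uniqueDiffWithinAt_Ioi 0)]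
    simp [g]
  have h0 : 0 ≤ h t := by
    have := isMinOn_iff.mp hmin t (Set.mem_univ t)
    simpa [h] using this
  have h1 : h t * Real.exp t = (1 + 2 * t / 3 + t ^ 2 / 6) - Real.exp t * (1 - t / 3) := by
    simp only [h]
    have : Real.exp (-t) * Real.exp t = 1 := by rw [← Real.exp_add]; simp
    linear_combination (1 + 2 * t / 3 + t ^ 2 / 6) * this
  have := mul_nonneg h0 (Real.exp_pos t).le
  linarith

/-- The quadratic bound of the exponential used for Bernstein's inequality. -/
lemma exp_le_bernstein {t a : ℝ} (hta : t ≤ a) (ha : a < 3) :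
    Real.exp t ≤ 1 + t + t ^ 2 / 2 / (1 - a / 3) := by
  have h1 := exp_mul_le t
  have h2 : 0 < 1 - t / 3 := by linarith
  have h3 : Real.exp t ≤ 1 + t + t ^ 2 / 2 / (1 - t / 3) := by
    rw [← le_div_iff₀ h2] at h1
    refine h1.trans_eq ?_
    rw [div_eq_iff h2.ne', add_mul, div_mul_cancel₀ _ h2.ne']
    ring
  refine h3.trans ?_
  gcongr
  linarith

lemma integral_sum_ind {Ω α : Type} [MeasurableSpace Ω] (μ : Measure Ω) [IsProbabilityMeasure μ]
    (P : Finset α) (w : α → ℝ) (S : α → Set Ω) (hS : ∀ G ∈ P, MeasurableSet (S G)) :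
    Integrable (fun ω => ∑ G ∈ P, w G * (S G).indicator 1 ω) μ ∧
    ∫ ω, ∑ G ∈ P, w G * (S G).indicator 1 ω ∂μ = ∑ G ∈ P, w G * μ.real (S G) := by
  have hint : ∀ G ∈ P, Integrable (fun ω => w G * (S G).indicator (1 : Ω → ℝ) ω) μ := fun G hG =>
    ((integrable_const (1 : ℝ)).indicator (hS G hG)).const_mul (w G)
  refine ⟨integrable_finsetSum _ hint, ?_⟩
  rw [integral_finsetSum _ hint]
  refine Finset.sum_congr rfl fun G hG => ?_
  rw [integral_const_mul, integral_indicator_one (hS G hG)]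

/-- If every point of `A` has total weight at least `c` in the sets `S G`, then
`c * μ A ≤ ∑ w G * μ (S G)`. -/
lemma weighted_le {Ω α : Type} [MeasurableSpace Ω] (μ : Measure Ω) [IsProbabilityMeasure μ]
    (P : Finset α) (w : α → ℝ) (S : α → Set Ω) (hS : ∀ G ∈ P, MeasurableSet (S G))
    (hw : ∀ G ∈ P, 0 ≤ w G) (A : Set Ω) (hA : MeasurableSet A) (c : ℝ)
    (h : ∀ ω ∈ A, c ≤ ∑ G ∈ P with ω ∈ S G, w G) :
    c * μ.real A ≤ ∑ G ∈ P, w G * μ.real (S G) := by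
  obtain ⟨h1, h2⟩ := integral_sum_ind μ P w S hS
  rw [← h2, ← integral_indicator_one hA, ← integral_const_mul]
  refine integral_mono (((integrable_const (1 : ℝ)).indicator hA).const_mul c) h1 fun ω => ?_
  have e : ∑ G ∈ P, w G * (S G).indicator 1 ω = ∑ G ∈ P with ω ∈ S G, w G := by
    rw [Finset.sum_filter]
    refine Finset.sum_congr rfl fun G _ => ?_
    by_cases hG : ω ∈ S G <;> simp [hG]
  simp only [e]
  by_cases hω : ω ∈ A
  · simpa [hω] using h ω hω
  · simpa [hω] using Finset.sum_nonneg fun G hG => hw G (Finset.mem_filter.mp hG).1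

lemma NegAssocOn.neg {Ω : Type} [MeasurableSpace Ω] {μ : Measure Ω} {ι : Type}
    {X : ι → Ω → ℝ} {S : Set ι} (h : NegAssocOn μ X S) :
    NegAssocOn μ (fun i ω => -X i ω) S := by
  intro A B hA hB hAB f g hf hg h1 h2 h3
  have := h A B hA hB hAB (fun y => -f (fun i => -y i)) (fun y => -g (fun i => -y i))
    (fun y z hyz => neg_le_neg (hf fun i => neg_le_neg (hyz i)))
    (fun y z hyz => neg_le_neg (hg fun i => neg_le_neg (hyz i)))
    h1.neg h2.neg (by simpa using h3)
  simpa [integral_neg] using this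

/-- Two increasing events determined by disjoint blocks of a negatively associated family are
negatively correlated; here the events are that some partial sum of the block exceeds a level. -/
lemma NegAssocOn.psum_events {Ω : Type} [MeasurableSpace Ω] {μ : Measure Ω}
    [IsProbabilityMeasure μ] {d : ℕ} {Y : (Fin d → ℕ) → Ω → ℝ} {S : Set (Fin d → ℕ)}
    (hNA : NegAssocOn μ Y S) (K A B : Finset (Fin d → ℕ)) (hA : ↑A ⊆ S) (hB : ↑B ⊆ S)
    (hAB : Disjoint A B) (a b : ℝ)
    (hUm : MeasurableSet {ω | ∃ k ∈ K, a ≤ psum A k fun i => Y i ω})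
    (hVm : MeasurableSet {ω | ∃ k ∈ K, b ≤ psum B k fun i => Y i ω}) :
    μ.real ({ω | ∃ k ∈ K, a ≤ psum A k fun i => Y i ω} ∩
        {ω | ∃ k ∈ K, b ≤ psum B k fun i => Y i ω}) ≤
      μ.real {ω | ∃ k ∈ K, a ≤ psum A k fun i => Y i ω} *
        μ.real {ω | ∃ k ∈ K, b ≤ psum B k fun i => Y i ω} := by
  set U := {ω | ∃ k ∈ K, a ≤ psum A k fun i => Y i ω}
  set V := {ω | ∃ k ∈ K, b ≤ psum B k fun i => Y i ω}
  let F : (C : Finset (Fin d → ℕ)) → ℝ → (↥C → ℝ) → ℝ := fun C c y =>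
    if ∃ k ∈ K, c ≤ ∑ i : ↥C, (if (i : Fin d → ℕ) ≤ k then y i else 0) then 1 else 0
  have hF : ∀ C c, Monotone (F C c) := by
    intro C c y z hyz
    simp only [F]
    split_ifs with h1 h2
    · exact le_rfl
    · refine absurd ?_ h2
      obtain ⟨k, hk, h⟩ := h1
      refine ⟨k, hk, h.trans (Finset.sum_le_sum fun i _ => ?_)⟩
      split_ifs
      · exact hyz i
      · exact le_rfl
    · exact zero_le_one
    · exact le_rfl
  have hFU : ∀ C c, (fun ω => F C c fun i => Y i ω) =
      {ω | ∃ k ∈ K, c ≤ psum C k fun i => Y i ω}.indicator 1 := by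
    intro C c
    funext ω
    simp only [F, psum, Set.indicator_apply, Set.mem_ofPred_eq, Pi.one_apply]
    refine if_congr ?_ rfl rfl
    refine exists_congr fun k => and_congr_right fun _ => ?_
    rw [Finset.sum_coe_sort C (fun i => if i ≤ k then Y i ω else 0)]
  have hprod : (fun ω => (F A a fun i => Y i ω) * (F B b fun i => Y i ω)) =
      (U ∩ V).indicator 1 := by
    funext ω
    rw [Set.inter_indicator_one, Pi.mul_apply]
    exact congr_arg₂ (· * ·) (congr_fun (hFU A a) ω) (congr_fun (hFU B b) ω)
  have hind : ∀ W : Set Ω, MeasurableSet W → Integrable (W.indicator (1 : Ω → ℝ)) μ :=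
    fun W hW => (integrable_const (1 : ℝ)).indicator hW
  have := hNA A B hA hB hAB (F A a) (F B b) (hF _ _) (hF _ _)
    (by rw [hFU]; exact hind _ hUm) (by rw [hFU]; exact hind _ hVm)
    (by rw [hprod]; exact hind _ (hUm.inter hVm))
  rw [hprod, hFU, hFU, integral_indicator_one hUm, integral_indicator_one hVm,
    integral_indicator_one (hUm.inter hVm)] at this
  exact this

lemma integrable_exp_sum {Ω ι : Type} [MeasurableSpace Ω] {μ : Measure Ω}
    [IsProbabilityMeasure μ] {Y : ι → Ω → ℝ} {b : ℝ} (G : Finset ι)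
    (hmeas : ∀ k ∈ G, Measurable (Y k)) (hbdd : ∀ k ∈ G, ∀ᵐ ω ∂μ, |Y k ω| ≤ b)
    {l : ℝ} (hl : 0 ≤ l) : Integrable (fun ω => Real.exp (l * ∑ i ∈ G, Y i ω)) μ := by
  refine Integrable.of_bound (C := Real.exp (l * ∑ i ∈ G, b)) ?_ ?_
  · exact ((Finset.measurable_fun_sum G hmeas).const_mul l).exp.aestronglyMeasurable
  · filter_upwards [(Finset.eventually_all G).mpr hbdd] with ω hω
    rw [Real.norm_eq_abs, Real.abs_exp, Real.exp_le_exp]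
    exact mul_le_mul_of_nonneg_left
      (Finset.sum_le_sum fun i hi => (le_abs_self _).trans (hω i hi)) hl

/-- Negative association makes the moment generating function submultiplicative. -/
lemma NegAssocOn.integral_exp_sum_le {Ω ι : Type} [MeasurableSpace Ω] {μ : Measure Ω}
    [IsProbabilityMeasure μ] {Y : ι → Ω → ℝ} {S : Set ι} {b : ℝ}
    (hNA : NegAssocOn μ Y S) {l : ℝ} (hl : 0 ≤ l) (G : Finset ι) (hG : ↑G ⊆ S)
    (hmeas : ∀ k ∈ G, Measurable (Y k)) (hbdd : ∀ k ∈ G, ∀ᵐ ω ∂μ, |Y k ω| ≤ b) :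
    ∫ ω, Real.exp (l * ∑ i ∈ G, Y i ω) ∂μ ≤ ∏ i ∈ G, ∫ ω, Real.exp (l * Y i ω) ∂μ := by
  induction G using Finset.induction_on with
  | empty => simp
  | insert a G ha ih =>
    have hsub : ∀ k ∈ G, k ∈ insert a G := fun k hk => Finset.mem_insert_of_mem hk
    have hexp : Monotone fun z : ℝ => Real.exp (l * z) := fun u v huv =>
      Real.exp_le_exp.mpr (mul_le_mul_of_nonneg_left huv hl)
    have hI := integrable_exp_sum G (fun k hk => hmeas k (hsub k hk))
      (fun k hk => hbdd k (hsub k hk)) hl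
    have hIa : Integrable (fun ω => Real.exp (l * Y a ω)) μ := by
      simpa using integrable_exp_sum {a} (fun k hk => hmeas k (by simp_all))
        (fun k hk => hbdd k (by simp_all)) hl
    have hI' := integrable_exp_sum (insert a G) hmeas hbdd hl
    have hmul : ∀ ω, Real.exp (l * ∑ i ∈ insert a G, Y i ω) =
        Real.exp (l * ∑ i ∈ G, Y i ω) * Real.exp (l * Y a ω) := fun ω => by
      rw [Finset.sum_insert ha, ← Real.exp_add]; ring_nf
    have hsort : ∀ (C : Finset ι) ω, ∑ i : ↥C, Y i ω = ∑ i ∈ C, Y i ω := fun C ω =>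
      Finset.sum_coe_sort C fun i => Y i ω
    have key := hNA {a} G (by simpa using hG (by simp)) (fun k hk => hG (by simp_all))
      (by simpa using ha)
      (fun y => Real.exp (l * ∑ i, y i)) (fun y => Real.exp (l * ∑ i, y i))
      (fun y z hyz => hexp (Finset.sum_le_sum fun i _ => hyz i))
      (fun y z hyz => hexp (Finset.sum_le_sum fun i _ => hyz i))
      (by simpa only [hsort, Finset.sum_singleton] using hIa)
      (by simpa only [hsort] using hI)
      (by
        simp only [hsort, Finset.sum_singleton]
        refine hI'.congr (Eventually.of_forall fun ω => ?_)
        simp only [hmul, mul_comm])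
    simp only [hsort, Finset.sum_singleton] at key
    rw [Finset.prod_insert ha]
    calc ∫ ω, Real.exp (l * ∑ i ∈ insert a G, Y i ω) ∂μ
        = ∫ ω, Real.exp (l * Y a ω) * Real.exp (l * ∑ i ∈ G, Y i ω) ∂μ := by
          simp only [hmul, mul_comm]
      _ ≤ _ := key
      _ ≤ _ := mul_le_mul_of_nonneg_left
          (ih (fun k hk => hG (by simp_all)) (fun k hk => hmeas k (hsub k hk))
            (fun k hk => hbdd k (hsub k hk))) (integral_nonneg fun ω => (Real.exp_pos _).le)

lemma integral_exp_le_bernstein {Ω : Type} [MeasurableSpace Ω] {μ : Measure Ω}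
    [IsProbabilityMeasure μ] {X : Ω → ℝ} {b l : ℝ} (hl : 0 ≤ l) (hlb : l * b < 3)
    (hm : Measurable X) (hbdd : ∀ᵐ ω ∂μ, |X ω| ≤ b) (h0 : ∫ ω, X ω ∂μ = 0) :
    ∫ ω, Real.exp (l * X ω) ∂μ ≤ 1 + l ^ 2 / 2 / (1 - l * b / 3) * ∫ ω, X ω ^ 2 ∂μ := by
  have hX : Integrable X μ := Integrable.of_bound hm.aestronglyMeasurable b hbdd
  have hX2 : Integrable (fun ω => X ω ^ 2) μ := by
    refine Integrable.of_bound (hm.pow_const 2).aestronglyMeasurable (b ^ 2) ?_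
    filter_upwards [hbdd] with ω hω
    rw [Real.norm_eq_abs, abs_pow]
    exact pow_le_pow_left₀ (abs_nonneg _) hω 2
  have hE : Integrable (fun ω => Real.exp (l * X ω)) μ := by
    simpa using integrable_exp_sum (Y := fun _ : Unit => X) (μ := μ) (b := b) {()}
      (fun _ _ => hm) (fun _ _ => hbdd) hl
  have hI1 : Integrable (fun ω => 1 + l * X ω) μ := (integrable_const _).add (hX.const_mul l)
  calc ∫ ω, Real.exp (l * X ω) ∂μ
      ≤ ∫ ω, (1 + l * X ω + l ^ 2 / 2 / (1 - l * b / 3) * X ω ^ 2) ∂μ := by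
        refine integral_mono_ae hE (hI1.add (hX2.const_mul _)) ?_
        filter_upwards [hbdd] with ω hω
        refine (exp_le_bernstein
          (mul_le_mul_of_nonneg_left ((le_abs_self _).trans hω) hl) hlb).trans_eq ?_
        ring
    _ = _ := by
        rw [integral_add hI1 (hX2.const_mul _),
          integral_add (integrable_const _) (hX.const_mul l), integral_const_mul,
          integral_const_mul, h0]
        simp

/-- Bernstein's inequality for the sum of a negatively associated family over a uniformly random
subset `G` of the index set. Since `∑_{G ⊆ I} ∏_{i ∈ G} m i = ∏_{i ∈ I} (1 + m i)`, the random choice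
halves the variance. -/
lemma avg_tail {Ω ι : Type} [MeasurableSpace Ω] {μ : Measure Ω}
    [IsProbabilityMeasure μ] {Y : ι → Ω → ℝ} {b : ℝ} (hb : 0 < b) (I : Finset ι)
    (hNA : NegAssocOn μ Y ↑I) (hmeas : ∀ k ∈ I, Measurable (Y k))
    (hmean : ∀ k ∈ I, ∫ ω, Y k ω ∂μ = 0)
    (hbdd : ∀ k ∈ I, ∀ᵐ ω ∂μ, |Y k ω| ≤ b) {x : ℝ} (hx : 0 < x) :
    ∑ G ∈ I.powerset, μ.real {ω | 7 / 3 * x ≤ ∑ i ∈ G, Y i ω} ≤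
      2 ^ #I * Real.exp (7 * (-x ^ 2 / (2 * (b * x + ∑ k ∈ I, ∫ ω, (Y k ω) ^ 2 ∂μ)))) := by
  set B := ∑ k ∈ I, ∫ ω, (Y k ω) ^ 2 ∂μ with hB
  have hB0 : 0 ≤ B := Finset.sum_nonneg fun k _ => integral_nonneg fun ω => sq_nonneg _
  have hbx : 0 < b * x := mul_pos hb hx
  set V := b * x + B with hV
  have hV0 : 0 < V := by positivity
  set l := 2 * x / V with hl
  have hl0 : 0 ≤ l := by positivity
  have hlb : l * b ≤ 2 := by
    rw [hl, div_mul_eq_mul_div, div_le_iff₀ hV0]; linarith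
  set c := l ^ 2 / 2 / (1 - l * b / 3) with hc
  have hc0 : 0 ≤ c := by
    have : 0 < 1 - l * b / 3 := by linarith
    positivity
  have hcB : c * B ≤ 2 * x ^ 2 / V := by
    have h1 : 0 < 1 - l * b / 3 := by linarith
    rw [hc, div_mul_eq_mul_div, div_le_iff₀ h1]
    have h2 : B / V ≤ 1 - l * b / 3 := by
      rw [hl, div_le_iff₀ hV0]
      have : (1 - 2 * x / V * b / 3) * V = V - 2 * x * b / 3 := by field_simp
      rw [this]; linarith
    have h3 : l ^ 2 / 2 * B = 2 * x ^ 2 / V * (B / V) := by rw [hl]; field_simp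
    rw [h3]
    exact mul_le_mul_of_nonneg_left h2 (by positivity)
  have hsub : ∀ G ∈ I.powerset, ∀ k ∈ G, k ∈ I := fun G hG k hk => Finset.mem_powerset.mp hG hk
  have h1 : ∀ G ∈ I.powerset, μ.real {ω | 7 / 3 * x ≤ ∑ i ∈ G, Y i ω} ≤
      Real.exp (-l * (7 / 3 * x)) * ∏ i ∈ G, ∫ ω, Real.exp (l * Y i ω) ∂μ := by
    intro G hG
    have hm : ∀ k ∈ G, Measurable (Y k) := fun k hk => hmeas k (hsub G hG k hk)
    have hbd : ∀ k ∈ G, ∀ᵐ ω ∂μ, |Y k ω| ≤ b := fun k hk => hbdd k (hsub G hG k hk)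
    refine (ProbabilityTheory.measure_ge_le_exp_mul_mgf (X := fun ω => ∑ i ∈ G, Y i ω)
      (7 / 3 * x) hl0 (integrable_exp_sum G hm hbd hl0)).trans ?_
    exact mul_le_mul_of_nonneg_left
      (hNA.integral_exp_sum_le hl0 G (fun k hk => hsub G hG k hk) hm hbd) (Real.exp_pos _).le
  have h2 : ∏ i ∈ I, (1 + ∫ ω, Real.exp (l * Y i ω) ∂μ) ≤ 2 ^ #I * Real.exp (c * B / 2) := by
    have : ∀ i ∈ I, 1 + ∫ ω, Real.exp (l * Y i ω) ∂μ ≤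
        2 * Real.exp (c * (∫ ω, Y i ω ^ 2 ∂μ) / 2) := fun i hi => by
      have e1 := integral_exp_le_bernstein hl0 (by linarith) (hmeas i hi) (hbdd i hi) (hmean i hi)
      rw [← hc] at e1
      have e2 := Real.add_one_le_exp (c * (∫ ω, Y i ω ^ 2 ∂μ) / 2)
      linarith
    refine (Finset.prod_le_prod (fun i _ => ?_) this).trans_eq ?_
    · have : 0 ≤ ∫ ω, Real.exp (l * Y i ω) ∂μ := integral_nonneg fun ω => (Real.exp_pos _).le
      linarith
    · rw [Finset.prod_mul_distrib, Finset.prod_const, ← Real.exp_sum, hB, Finset.mul_sum,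
        Finset.sum_div]
  calc _ ≤ ∑ G ∈ I.powerset,
        Real.exp (-l * (7 / 3 * x)) * ∏ i ∈ G, ∫ ω, Real.exp (l * Y i ω) ∂μ :=
        Finset.sum_le_sum h1
    _ = Real.exp (-l * (7 / 3 * x)) * ∏ i ∈ I, (1 + ∫ ω, Real.exp (l * Y i ω) ∂μ) := by
        rw [← Finset.mul_sum, Finset.prod_one_add]
    _ ≤ Real.exp (-l * (7 / 3 * x)) * (2 ^ #I * Real.exp (c * B / 2)) :=
        mul_le_mul_of_nonneg_left h2 (Real.exp_pos _).le
    _ = 2 ^ #I * Real.exp (-l * (7 / 3 * x) + c * B / 2) := by rw [Real.exp_add]; ring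
    _ ≤ _ := by
        refine mul_le_mul_of_nonneg_left (Real.exp_le_exp.mpr ?_) (by positivity)
        have e1 : -l * (7 / 3 * x) = -(14 / 3) * (x ^ 2 / V) := by rw [hl]; field_simp; ring
        have e2 : 7 * (-x ^ 2 / (2 * V)) = -(7 / 2) * (x ^ 2 / V) := by field_simp
        have e3 : 2 * x ^ 2 / V = 2 * (x ^ 2 / V) := by ring
        have e4 : 0 ≤ x ^ 2 / V := by positivity
        rw [e3] at hcB
        rw [e1, e2]
        linarith

/-! ### Symmetrization and desymmetrization -/

lemma measurable_psum {Ω : Type} [MeasurableSpace Ω] {d : ℕ} {Y : (Fin d → ℕ) → Ω → ℝ}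
    {G : Finset (Fin d → ℕ)} (hmeas : ∀ k ∈ G, Measurable (Y k)) (k : Fin d → ℕ) :
    Measurable fun ω => psum G k fun i => Y i ω := by
  unfold psum
  refine Finset.measurable_fun_sum G fun i hi => ?_
  split_ifs
  · exact hmeas i hi
  · exact measurable_const

lemma measurable_rsum {Ω : Type} [MeasurableSpace Ω] {d : ℕ} {Y : (Fin d → ℕ) → Ω → ℝ}
    {I : Finset (Fin d → ℕ)} (hmeas : ∀ k ∈ I, Measurable (Y k)) (G : Finset (Fin d → ℕ))
    (k : Fin d → ℕ) : Measurable fun ω => rsum I G k fun i => Y i ω := by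
  unfold rsum
  refine Finset.measurable_fun_sum I fun i hi => ?_
  split_ifs
  · exact hmeas i hi
  · exact (hmeas i hi).neg
  · exact measurable_const

lemma measurableSet_exists_le {Ω ι : Type} [MeasurableSpace Ω] (K : Finset ι) (a : ℝ)
    (f : ι → Ω → ℝ) (hf : ∀ k, Measurable (f k)) : MeasurableSet {ω | ∃ k ∈ K, a ≤ f k ω} := by
  have : {ω | ∃ k ∈ K, a ≤ f k ω} = ⋃ k ∈ K, {ω | a ≤ f k ω} := by ext; simp
  rw [this]
  exact Finset.measurableSet_biUnion K fun k _ => measurableSet_le measurable_const (hf k)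

lemma measurableSet_count_ge {Ω α : Type} [MeasurableSpace Ω] (P : Finset α) (S : α → Set Ω)
    (hS : ∀ G ∈ P, MeasurableSet (S G)) (c : ℝ) :
    MeasurableSet {ω | c ≤ ∑ G ∈ P with ω ∈ S G, (1 : ℝ)} := by
  refine measurableSet_le measurable_const ?_
  simp only [Finset.sum_filter]
  exact Finset.measurable_fun_sum P fun G hG =>
    Measurable.ite (hS G hG) measurable_const measurable_const

/-- The event that some signed partial sum, with sign pattern `G`, is at least `s` in absolute
value. -/
def bigEvent {Ω : Type} {d : ℕ} (n : Fin d → ℕ) (Y : (Fin d → ℕ) → Ω → ℝ) (s : ℝ)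
    (G : Finset (Fin d → ℕ)) : Set Ω :=
  {ω | ∃ k ∈ Finset.Icc 1 n, s ≤ |rsum (Finset.Icc 1 n) G k fun i => Y i ω|}

lemma measurableSet_bigEvent {Ω : Type} [MeasurableSpace Ω] {d : ℕ} {n : Fin d → ℕ}
    {Y : (Fin d → ℕ) → Ω → ℝ} (hmeas : ∀ k ∈ Finset.Icc 1 n, Measurable (Y k)) (s : ℝ)
    (G : Finset (Fin d → ℕ)) : MeasurableSet (bigEvent n Y s G) :=
  measurableSet_exists_le _ _ (fun k ω => |rsum (Finset.Icc 1 n) G k fun i => Y i ω|)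
    fun k => (measurable_rsum hmeas G k).abs

/-- The tail bound for the maximum of the randomly signed partial sums, as an average over all sign
patterns: Lévy's inequality reduces it to the full signed sum, which is a difference of two sums over
complementary random subsets. -/
lemma sym_tail {Ω : Type} [MeasurableSpace Ω] {μ : Measure Ω} [IsProbabilityMeasure μ]
    {d : ℕ} {n : Fin d → ℕ} (hn : 1 ≤ n) {Y : (Fin d → ℕ) → Ω → ℝ} {b : ℝ} (hb : 0 < b)
    (hmeas : ∀ k ∈ Finset.Icc (1 : Fin d → ℕ) n, Measurable (Y k))
    (hNA : NegAssocOn μ Y ↑(Finset.Icc 1 n))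
    (hmean : ∀ k ∈ Finset.Icc (1 : Fin d → ℕ) n, ∫ ω, Y k ω ∂μ = 0)
    (hbdd : ∀ k ∈ Finset.Icc (1 : Fin d → ℕ) n, ∀ᵐ ω ∂μ, |Y k ω| ≤ b) {x : ℝ} (hx : 0 < x) :
    ∑ G ∈ (Finset.Icc 1 n).powerset, μ.real (bigEvent n Y (14 / 3 * x) G) ≤
      2 ^ #(Finset.Icc 1 n) * (2 ^ d * 4 * Real.exp (7 * (-x ^ 2 /
        (2 * (b * x + ∑ k ∈ Finset.Icc 1 n, ∫ ω, (Y k ω) ^ 2 ∂μ))))) := by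
  set I := Finset.Icc 1 n with hI
  set Z := Real.exp (7 * (-x ^ 2 / (2 * (b * x + ∑ k ∈ I, ∫ ω, (Y k ω) ^ 2 ∂μ)))) with hZ
  let L : Finset (Fin d → ℕ) → Set Ω := fun G => {ω | 14 / 3 * x ≤ |rsum I G n fun i => Y i ω|}
  have hLm : ∀ G, MeasurableSet (L G) := fun G =>
    measurableSet_le measurable_const (measurable_rsum hmeas G n).abs
  have hlevy : ∑ G ∈ I.powerset, μ.real (bigEvent n Y (14 / 3 * x) G) ≤
      2 ^ d * ∑ G ∈ I.powerset, μ.real (L G) := by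
    obtain ⟨i1, e1⟩ := integral_sum_ind μ I.powerset (fun _ => 1)
      (fun G => bigEvent n Y (14 / 3 * x) G) fun G _ => measurableSet_bigEvent hmeas _ G
    obtain ⟨i2, e2⟩ := integral_sum_ind μ I.powerset (fun _ => 2 ^ d) L fun G _ => hLm G
    simp only [one_mul] at i1 e1
    rw [Finset.mul_sum, ← e1, ← e2]
    refine integral_mono i1 i2 fun ω => ?_
    have hl := levy n (fun i => Y i ω) (14 / 3 * x)
    have c1 : ∑ G ∈ I.powerset, (bigEvent n Y (14 / 3 * x) G).indicator (1 : Ω → ℝ) ω =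
        #(levyFam n (fun i => Y i ω) (14 / 3 * x) d) := by
      simp only [Set.indicator_apply, Pi.one_apply]
      rw [Finset.sum_boole]
      congr 2
      ext G
      rw [Finset.mem_filter, Finset.mem_powerset, mem_levyFam]
      refine and_congr_right fun _ => exists_congr fun k => and_congr_right fun _ => ?_
      exact ⟨fun h => ⟨fun i hi => absurd i.2 (by omega), h⟩, fun h => h.2⟩
    have c2 : ∑ G ∈ I.powerset, (2 : ℝ) ^ d * (L G).indicator (1 : Ω → ℝ) ω =
        2 ^ d * #(levyFam n (fun i => Y i ω) (14 / 3 * x) 0) := by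
      rw [← Finset.mul_sum]
      simp only [Set.indicator_apply, Pi.one_apply]
      rw [Finset.sum_boole]
      congr 3
      ext G
      simp only [Finset.mem_filter, Finset.mem_powerset, mem_levyFam, L,
        Set.mem_ofPred_eq]
      refine and_congr_right fun _ => ⟨fun h => ⟨n, ?_, fun _ _ => rfl, h⟩, ?_⟩
      · exact Finset.mem_Icc.mpr ⟨hn, le_rfl⟩
      · rintro ⟨k, _, hk, h⟩
        have : k = n := funext fun i => hk i (Nat.zero_le _)
        rwa [this] at h
    simp only [c1, c2]
    exact_mod_cast hl
  let f : Finset (Fin d → ℕ) → ℝ := fun G => μ.real {ω | 7 / 3 * x ≤ ∑ i ∈ G, Y i ω}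
  let g : Finset (Fin d → ℕ) → ℝ := fun G => μ.real {ω | 7 / 3 * x ≤ ∑ i ∈ G, -Y i ω}
  have hf : ∑ G ∈ I.powerset, f G ≤ 2 ^ #I * Z := avg_tail hb I hNA hmeas hmean hbdd hx
  have hg : ∑ G ∈ I.powerset, g G ≤ 2 ^ #I * Z := by
    have := avg_tail hb I hNA.neg (fun k hk => (hmeas k hk).neg)
      (fun k hk => by rw [integral_neg, hmean k hk, neg_zero])
      (fun k hk => by simpa only [abs_neg] using hbdd k hk) hx
    simpa only [neg_sq] using this
  have hcompl : ∀ h : Finset (Fin d → ℕ) → ℝ,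
      ∑ G ∈ I.powerset, h (I \ G) = ∑ G ∈ I.powerset, h G := fun h => by
    refine Finset.sum_nbij' (fun G => I \ G) (fun G => I \ G) ?_ ?_ ?_ ?_ ?_
    · intro G _; simp
    · intro G _; simp
    · intro G hG; simpa using Finset.mem_powerset.mp hG
    · intro G hG; simpa using Finset.mem_powerset.mp hG
    · intro G _; rfl
  have hL : ∀ G ∈ I.powerset, μ.real (L G) ≤ f G + g G + (f (I \ G) + g (I \ G)) := by
    intro G hG
    have hGI := Finset.mem_powerset.mp hG
    have hsub : L G ⊆ ({ω | 7 / 3 * x ≤ ∑ i ∈ G, Y i ω} ∪ {ω | 7 / 3 * x ≤ ∑ i ∈ G, -Y i ω}) ∪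
        ({ω | 7 / 3 * x ≤ ∑ i ∈ I \ G, Y i ω} ∪ {ω | 7 / 3 * x ≤ ∑ i ∈ I \ G, -Y i ω}) := by
      intro ω hω
      have hω : 14 / 3 * x ≤ |rsum I G n fun i => Y i ω| := hω
      rw [rsum_eq hGI, psum_top hGI, psum_top Finset.sdiff_subset] at hω
      simp only [Set.mem_union, Set.mem_ofPred_eq, Finset.sum_neg_distrib]
      by_contra! hcon
      obtain ⟨⟨h1, h2⟩, h3, h4⟩ := hcon
      have : |∑ i ∈ G, Y i ω - ∑ i ∈ I \ G, Y i ω| < 14 / 3 * x := by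
        rw [abs_lt]; constructor <;> linarith
      linarith
    refine (measureReal_mono hsub).trans ((measureReal_union_le _ _).trans ?_)
    exact add_le_add (measureReal_union_le _ _) (measureReal_union_le _ _)
  have hsum : ∑ G ∈ I.powerset, μ.real (L G) ≤ 4 * (2 ^ #I * Z) := by
    refine (Finset.sum_le_sum hL).trans ?_
    rw [Finset.sum_add_distrib, Finset.sum_add_distrib, Finset.sum_add_distrib, hcompl f, hcompl g]
    linarith
  refine hlevy.trans ((mul_le_mul_of_nonneg_left hsum (by positivity)).trans_eq ?_)
  ring

/-- The desymmetrization step. Split the sum over `[1, k]` into its parts over `G` and over the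
complement of `G`. If the full sum is large and few sign patterns have a large signed sum, then for
most `G` the first part is large; for at least nearly half of the `G`, in the weighted sense, the
second part is not too large; by negative association the two happen together with at least the
product of the probabilities, and then the signed sum is large. -/
lemma one_sided {Ω : Type} [MeasurableSpace Ω] {μ : Measure Ω} [IsProbabilityMeasure μ]
    {d : ℕ} {n : Fin d → ℕ} {Y : (Fin d → ℕ) → Ω → ℝ}
    (hmeas : ∀ k ∈ Finset.Icc (1 : Fin d → ℕ) n, Measurable (Y k))
    (hNA : NegAssocOn μ Y ↑(Finset.Icc 1 n)) {x m p : ℝ} (hx : 0 < x)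
    (hp : ∑ G ∈ (Finset.Icc 1 n).powerset, μ.real (bigEvent n Y (14 / 3 * x) G) ≤
      2 ^ #(Finset.Icc 1 n) * p)
    (hM : μ.real {ω | ∃ k ∈ Finset.Icc 1 n,
      2 * m + x ≤ |psum (Finset.Icc 1 n) k fun i => Y i ω|} ≤ 1 / 2) :
    (1 / 4 - p) * μ.real ({ω | ∃ k ∈ Finset.Icc 1 n,
        2 * m + 20 * x ≤ psum (Finset.Icc 1 n) k fun i => Y i ω} \
      {ω | 2 ^ #(Finset.Icc 1 n) / 4 ≤
        ∑ G ∈ (Finset.Icc 1 n).powerset with ω ∈ bigEvent n Y (14 / 3 * x) G, (1 : ℝ)}) ≤ p := by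
  set I := Finset.Icc 1 n with hI
  set N : ℝ := 2 ^ #I with hN
  have hN0 : 0 < N := by positivity
  set E := fun G => bigEvent n Y (14 / 3 * x) G with hE
  have hEm : ∀ G, MeasurableSet (E G) := fun G => measurableSet_bigEvent hmeas _ G
  let c := m + 10 * x - 7 / 3 * x
  let v := m + 17 / 6 * x
  let S : Finset (Fin d → ℕ) → Set Ω := fun G => {ω | ∃ k ∈ I, c ≤ psum G k fun i => Y i ω}
  let V : Finset (Fin d → ℕ) → Set Ω := fun G => {ω | ∃ k ∈ I, v ≤ psum (I \ G) k fun i => Y i ω}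
  have hSm : ∀ G ∈ I.powerset, MeasurableSet (S G) := fun G hG =>
    measurableSet_exists_le I c (fun k ω => psum G k fun i => Y i ω) fun k =>
      measurable_psum (fun i hi => hmeas i (Finset.mem_powerset.mp hG hi)) k
  have hVm : ∀ G ∈ I.powerset, MeasurableSet (V G) := fun G _ =>
    measurableSet_exists_le I v (fun k ω => psum (I \ G) k fun i => Y i ω) fun k =>
      measurable_psum (fun i hi => hmeas i (Finset.sdiff_subset hi)) k
  let q : Finset (Fin d → ℕ) → ℝ := fun G => 1 - μ.real (V G)
  have hq0 : ∀ G, 0 ≤ q G := fun G => sub_nonneg.mpr measureReal_le_one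
  have hq1 : ∀ G, q G ≤ 1 := fun G => sub_le_self _ measureReal_nonneg
  have step1 : ∀ G ∈ I.powerset, q G * μ.real (S G) ≤ μ.real (E G) := by
    intro G hG
    have hGI := Finset.mem_powerset.mp hG
    have h1 : μ.real (S G ∩ V G) ≤ μ.real (S G) * μ.real (V G) :=
      hNA.psum_events I G (I \ G) (by exact_mod_cast hGI)
        (by exact_mod_cast (Finset.sdiff_subset : I \ G ⊆ I))
        Finset.disjoint_sdiff c v (hSm G hG) (hVm G hG)
    have h2 : μ.real (S G ∩ V G) + μ.real (S G \ V G) = μ.real (S G) :=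
      measureReal_inter_add_sdiff (hVm G hG)
    have h3 : μ.real (S G \ V G) ≤ μ.real (E G) := by
      refine measureReal_mono ?_
      rintro ω ⟨⟨k, hk, h⟩, hV⟩
      have hV' : psum (I \ G) k (fun i => Y i ω) < v := by
        by_contra! hcon
        exact hV ⟨k, hk, hcon⟩
      refine ⟨k, hk, ?_⟩
      rw [← hI, rsum_eq hGI]
      refine le_trans ?_ (le_abs_self _)
      simp only [c, v] at h hV'
      linarith
    have : q G * μ.real (S G) = μ.real (S G) - μ.real (S G) * μ.real (V G) := by
      simp only [q]; ring
    linarith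
  have step2 : N * (1 / 2 - p) ≤ ∑ G ∈ I.powerset, q G := by
    have h1 : ∀ G ∈ I.powerset, 1 / 2 - μ.real (E G) ≤ q G := by
      intro G hG
      have hGI := Finset.mem_powerset.mp hG
      have hsub : V G ⊆ {ω | ∃ k ∈ I, 2 * m + x ≤ |psum I k fun i => Y i ω|} ∪ E G := by
        rintro ω ⟨k, hk, h⟩
        by_contra hcon
        rw [Set.mem_union, not_or] at hcon
        have e1 : |psum I k fun i => Y i ω| < 2 * m + x := by
          by_contra! h'
          exact hcon.1 ⟨k, hk, h'⟩
        have e2 : |rsum I G k fun i => Y i ω| < 14 / 3 * x := by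
          by_contra! h'
          exact hcon.2 ⟨k, hk, h'⟩
        rw [rsum_eq hGI] at e2
        rw [← psum_add_sdiff hGI] at e1
        rw [abs_lt] at e1 e2
        simp only [v] at h
        linarith
      have := (measureReal_mono (μ := μ) hsub).trans (measureReal_union_le _ _)
      simp only [q]
      linarith
    refine le_trans ?_ (Finset.sum_le_sum h1)
    rw [Finset.sum_sub_distrib, Finset.sum_const, Finset.card_powerset, nsmul_eq_mul]
    push_cast
    rw [← hN]
    linarith
  have step3 := weighted_le μ I.powerset q S hSm (fun G _ => hq0 G)
    ({ω | ∃ k ∈ I, 2 * m + 20 * x ≤ psum I k fun i => Y i ω} \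
      {ω | N / 4 ≤ ∑ G ∈ I.powerset with ω ∈ E G, (1 : ℝ)})
    ((measurableSet_exists_le I _ (fun k ω => psum I k fun i => Y i ω)
      fun k => measurable_psum hmeas k).diff (measurableSet_count_ge _ _ (fun G _ => hEm G) _))
    (N * (1 / 4 - p)) (by
      rintro ω ⟨⟨k, hk, h⟩, hgood⟩
      have hgood : ∑ G ∈ I.powerset with ω ∈ E G, (1 : ℝ) < N / 4 := not_le.mp hgood
      have h1 : ∑ G ∈ I.powerset with ω ∈ S G, q G + ∑ G ∈ I.powerset with ω ∉ S G, q G =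
          ∑ G ∈ I.powerset, q G := by
        rw [Finset.sum_filter, Finset.sum_filter, ← Finset.sum_add_distrib]
        refine Finset.sum_congr rfl fun G _ => ?_
        by_cases hG : ω ∈ S G <;> simp [hG]
      have h2 : ∑ G ∈ I.powerset with ω ∉ S G, q G ≤
          ∑ G ∈ I.powerset with ω ∈ E G, (1 : ℝ) := by
        calc ∑ G ∈ I.powerset with ω ∉ S G, q G
            ≤ ∑ G ∈ I.powerset with ω ∉ S G, (1 : ℝ) := Finset.sum_le_sum fun G _ => hq1 G
          _ ≤ _ := by
            refine Finset.sum_le_sum_of_subset_of_nonneg ?_ fun _ _ _ => zero_le_one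
            intro G hG
            rw [Finset.mem_filter] at hG ⊢
            refine ⟨hG.1, k, hk, ?_⟩
            have hGI := Finset.mem_powerset.mp hG.1
            have e1 : psum G k (fun i => Y i ω) < c := by
              by_contra! h'
              exact hG.2 ⟨k, hk, h'⟩
            have e2 := psum_add_sdiff hGI k fun i => Y i ω
            rw [← hI, rsum_eq hGI, ← abs_neg]
            refine le_trans ?_ (le_abs_self _)
            simp only [c] at e1
            linarith
      have h3 : N * (1 / 4 - p) ≤ ∑ G ∈ I.powerset with ω ∈ S G, q G := by linarith
      convert h3)
  have step4 := step3.trans ((Finset.sum_le_sum step1).trans hp)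
  rw [mul_assoc] at step4
  exact le_of_mul_le_mul_left step4 hN0

end Helpers

/-- **Kolmogorov-type exponential inequality for the maximum of partial sums of a negatively
associated field** (Theorem 2.3). If `|Y_k| ≤ b` a.s. then for all `x > 0`,
`P(M_n − 2 E M_n ≥ 20 x) ≤ 2^{d+1} exp(−x² / (2(b x + B_n²)))`. -/
theorem na_field_kolmogorov_exponential_inequality
    {Ω : Type} [MeasurableSpace Ω] (μ : Measure Ω) [IsProbabilityMeasure μ]
    (d : ℕ) (n : Fin d → ℕ) (hn : (1 : Fin d → ℕ) ≤ n)
    (Y : (Fin d → ℕ) → Ω → ℝ)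
    (b : ℝ) (hb : 0 < b)
    (hmeas : ∀ k ∈ Finset.Icc (1 : Fin d → ℕ) n, Measurable (Y k))
    (hNA : NegAssocOn μ Y (Set.Icc 1 n))
    (hmean : ∀ k ∈ Finset.Icc (1 : Fin d → ℕ) n, ∫ ω, Y k ω ∂μ = 0)
    (hbdd : ∀ k ∈ Finset.Icc (1 : Fin d → ℕ) n, ∀ᵐ ω ∂μ, |Y k ω| ≤ b)
    (x : ℝ) (hx : 0 < x) :
    μ {ω | 20 * x ≤
        (Finset.Icc (1 : Fin d → ℕ) n).sup' (Finset.nonempty_Icc.mpr hn)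
          (fun k => |∑ i ∈ Finset.Icc (1 : Fin d → ℕ) k, Y i ω|)
        - 2 * ∫ ω', (Finset.Icc (1 : Fin d → ℕ) n).sup' (Finset.nonempty_Icc.mpr hn)
            (fun k => |∑ i ∈ Finset.Icc (1 : Fin d → ℕ) k, Y i ω'|) ∂μ} ≤
      ENNReal.ofReal (2 ^ (d + 1) * Real.exp (- x ^ 2 /
        (2 * (b * x + ∑ k ∈ Finset.Icc (1 : Fin d → ℕ) n, ∫ ω, (Y k ω) ^ 2 ∂μ)))) := by
  classical
  set I := Finset.Icc (1 : Fin d → ℕ) n with hI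
  have hNA' : NegAssocOn μ Y ↑I := by rwa [hI, Finset.coe_Icc]
  set B := ∑ k ∈ I, ∫ ω, (Y k ω) ^ 2 ∂μ with hB
  set M : Ω → ℝ := fun ω => I.sup' (Finset.nonempty_Icc.mpr hn)
    (fun k => |∑ i ∈ Finset.Icc (1 : Fin d → ℕ) k, Y i ω|) with hMdef
  set m := ∫ ω, M ω ∂μ with hm
  set z := Real.exp (-x ^ 2 / (2 * (b * x + B))) with hz
  have hz0 : 0 < z := Real.exp_pos _
  have hsumm : ∀ k ∈ I, Measurable fun ω => |∑ i ∈ Finset.Icc (1 : Fin d → ℕ) k, Y i ω| := by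
    intro k hk
    refine (Finset.measurable_fun_sum _ fun i hi => hmeas i ?_).abs
    exact Finset.Icc_subset_Icc le_rfl (Finset.mem_Icc.mp hk).2 hi
  have hMm : Measurable M := by
    have := Finset.measurable_sup' (Finset.nonempty_Icc.mpr hn) hsumm
    convert this using 1
    funext ω
    rw [Finset.sup'_apply]
  have hM0 : ∀ ω, 0 ≤ M ω := fun ω =>
    (abs_nonneg _).trans (Finset.le_sup' (fun k => |∑ i ∈ Finset.Icc (1 : Fin d → ℕ) k, Y i ω|)
      (Finset.mem_Icc.mpr ⟨hn, le_rfl⟩ : n ∈ I))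
  have hMint : Integrable M μ := by
    refine Integrable.of_bound hMm.aestronglyMeasurable (∑ i ∈ I, b) ?_
    filter_upwards [(Finset.eventually_all I).mpr hbdd] with ω hω
    rw [Real.norm_eq_abs, abs_of_nonneg (hM0 ω)]
    refine Finset.sup'_le _ _ fun k hk => ?_
    have hsub : Finset.Icc 1 k ⊆ I := Finset.Icc_subset_Icc le_rfl (Finset.mem_Icc.mp hk).2
    calc |∑ i ∈ Finset.Icc 1 k, Y i ω| ≤ ∑ i ∈ Finset.Icc 1 k, |Y i ω| :=
          Finset.abs_sum_le_sum_abs _ _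
      _ ≤ ∑ i ∈ Finset.Icc 1 k, b := Finset.sum_le_sum fun i hi => hω i (hsub hi)
      _ ≤ ∑ i ∈ I, b := Finset.sum_le_sum_of_subset_of_nonneg hsub fun _ _ _ => hb.le
  have hm0 : 0 ≤ m := integral_nonneg hM0
  have hMiff : ∀ (a : ℝ) ω, a ≤ M ω ↔ ∃ k ∈ I, a ≤ |psum I k fun i => Y i ω| := by
    intro a ω
    simp only [hMdef, Finset.le_sup'_iff]
    refine exists_congr fun k => and_congr_right fun hk => ?_
    rw [sum_Icc_eq_psum (Finset.mem_Icc.mp hk).2 fun i => Y i ω]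
  have hmarkov : μ.real {ω | ∃ k ∈ I, 2 * m + x ≤ |psum I k fun i => Y i ω|} ≤ 1 / 2 := by
    have h1 := mul_meas_ge_le_integral_of_nonneg (Eventually.of_forall hM0) hMint (2 * m + x)
    simp only [hMiff, ← hm] at h1
    set r := μ.real {ω | ∃ k ∈ I, 2 * m + x ≤ |psum I k fun i => Y i ω|}
    have hr : 0 ≤ r := measureReal_nonneg
    by_contra! hcon
    nlinarith
  rw [← ofReal_measureReal]
  refine ENNReal.ofReal_le_ofReal ?_
  -- The bound is at least `1` unless `z` is small compared with `2 ^ d`.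
  by_cases htriv : 1 ≤ 2 ^ (d + 1) * z
  · exact measureReal_le_one.trans htriv
  push Not at htriv
  set D : ℝ := 2 ^ d with hD
  have hD1 : 1 ≤ D := one_le_pow₀ (by norm_num)
  have hDz : D * z < 1 / 2 := by rw [pow_succ] at htriv; linarith
  have hz1 : z < 1 / 2 := by nlinarith
  set p := D * 4 * z ^ 7 with hp
  have hsym := sym_tail hn hb hmeas hNA' hmean hbdd hx
  have hz7 : Real.exp (7 * (-x ^ 2 / (2 * (b * x + B)))) = z ^ 7 := by
    rw [hz, ← Real.exp_nat_mul]; norm_num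
  rw [← hI, ← hB, hz7, ← hD, ← hp] at hsym
  have hz6 : z ^ 6 ≤ 1 / 64 := by
    have := pow_le_pow_left₀ hz0.le hz1.le 6
    norm_num at this ⊢
    exact this
  have hp0 : 0 ≤ p := by positivity
  have hp1 : p ≤ D * z / 16 := by
    have : p = 4 * (D * z) * z ^ 6 := by rw [hp]; ring
    rw [this]
    nlinarith [mul_nonneg (zero_le_one.trans hD1) hz0.le]
  set bad : Set Ω := {ω | 2 ^ #I / 4 ≤
    ∑ G ∈ I.powerset with ω ∈ bigEvent n Y (14 / 3 * x) G, (1 : ℝ)} with hbad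
  have hbadm : μ.real bad ≤ 4 * p := by
    have h1 := weighted_le μ I.powerset (fun _ => 1) (fun G => bigEvent n Y (14 / 3 * x) G)
      (fun G _ => measurableSet_bigEvent hmeas _ G) (fun _ _ => zero_le_one) bad
      (measurableSet_count_ge _ _ (fun G _ => measurableSet_bigEvent hmeas _ G) _) (2 ^ #I / 4)
      (fun ω hω => hω)
    simp only [one_mul] at h1
    have h2 := h1.trans hsym
    have hN : (0 : ℝ) < 2 ^ #I := by positivity
    have h3 : (2 : ℝ) ^ #I * (μ.real bad / 4) ≤ 2 ^ #I * p := by linarith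
    have := le_of_mul_le_mul_left h3 hN
    linarith
  have hpos := one_sided hmeas hNA' hx hsym hmarkov
  have hbign : ∀ G, bigEvent n (fun i ω => -Y i ω) (14 / 3 * x) G = bigEvent n Y (14 / 3 * x) G := by
    intro G
    ext ω
    simp only [bigEvent, Set.mem_ofPred_eq, rsum_neg _ _ _ fun i => Y i ω, abs_neg]
  have hneg := one_sided (Y := fun i ω => -Y i ω) (μ := μ) (n := n) (x := x) (m := m) (p := p)
    (fun k hk => (hmeas k hk).neg) hNA'.neg hx (by simpa only [hbign] using hsym)
    (by simpa only [psum_neg _ _ fun i => Y i _, abs_neg] using hmarkov)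
  simp only [hbign] at hneg
  rw [← hI, ← hbad] at hpos hneg
  set Ap := {ω | ∃ k ∈ I, 2 * m + 20 * x ≤ psum I k fun i => Y i ω} with hAp
  set An := {ω | ∃ k ∈ I, 2 * m + 20 * x ≤ psum I k fun i => -Y i ω} with hAn
  have hsub : {ω | 20 * x ≤ M ω - 2 * m} ⊆ bad ∪ (Ap \ bad ∪ An \ bad) := by
    intro ω hω
    have hω : 20 * x ≤ M ω - 2 * m := hω
    by_cases hb' : ω ∈ bad
    · exact Or.inl hb'
    obtain ⟨k, hk, h⟩ := (hMiff (2 * m + 20 * x) ω).mp (by linarith)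
    rcases le_abs.mp h with h | h
    · exact Or.inr (Or.inl ⟨⟨k, hk, h⟩, hb'⟩)
    · exact Or.inr (Or.inr ⟨⟨k, hk, by rwa [psum_neg _ _ fun i => Y i ω]⟩, hb'⟩)
  have htot : μ.real {ω | 20 * x ≤ M ω - 2 * m} ≤
      μ.real bad + (μ.real (Ap \ bad) + μ.real (An \ bad)) :=
    (measureReal_mono hsub).trans ((measureReal_union_le _ _).trans
      (add_le_add le_rfl (measureReal_union_le _ _)))
  have hp32 : p ≤ 1 / 32 := by linarith
  have hside : ∀ r : ℝ, 0 ≤ r → (1 / 4 - p) * r ≤ p → r ≤ 5 * p := fun r hr h => by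
    nlinarith [mul_nonneg hr (sub_nonneg.mpr hp32)]
  have e1 := hside _ measureReal_nonneg hpos
  have e2 := hside _ measureReal_nonneg hneg
  rw [pow_succ]
  have : 0 ≤ D * z := by positivity
  linarith
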